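/- arXiv:1612.02733 — 2 statements merged into one kernel-verified Lean document; each statement's English description precedes it below -/
import Mathlib

section
/- Let Γ be a simple graph with vertex set Λ and V : Λ → B(K) an isometric Nica-covariant family on a complex Hilbert space K. The range projections P_i = V i (V i)* pairwise commute. Moreover, for every finite subset U ⊆ Λ: if U is a clique then ∏_{i∈U} P_i = V_U (V_U)*, and if U contains two distinct non-adjacent vertices then ∏_{i∈U} P_i = 0. -/
open scoped ComplexOrder
theorem aux_comm {A : Type*} [Ring A] [StarRing A] {a b : A} (h1 : a * b = b * a)
    (h2 : star a * b = b * star a) : Commute (a * star a) (b * star b) := by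
  have c1 : Commute a b := h1
  have c2 : Commute (star a) b := h2
  have c3 : Commute a (star b) := by simpa using c2.star_star
  exact ((c1.mul_right c3)).mul_left (c2.mul_right c1.star_star)

theorem aux_zero {A : Type*} [Ring A] [StarRing A] {a b : A}
    (h : star a * b = 0) : (a * star a) * (b * star b) = 0 := by
  rw [mul_assoc, ← mul_assoc (star a), h, zero_mul, mul_zero]

theorem aux_clique {Λ A : Type*} [Ring A] [StarRing A] (V : Λ → A) (U : Finset Λ)
    (h2 : ∀ i ∈ U, ∀ j ∈ U, i ≠ j → star (V i) * V j = V j * star (V i))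
    (hc : (U : Set Λ).Pairwise (Function.onFun Commute V))
    (hp : (U : Set Λ).Pairwise (Function.onFun Commute (fun i => V i * star (V i)))) :
    U.noncommProd (fun i => V i * star (V i)) hp =
      U.noncommProd V hc * star (U.noncommProd V hc) := by
  classical
  induction U using Finset.induction_on with
  | empty => simp
  | insert a s ha ih =>
    have hs : (s : Set Λ) ⊆ (insert a s : Finset Λ) := by simp
    rw [Finset.noncommProd_insert_of_notMem _ _ _ _ ha,
      Finset.noncommProd_insert_of_notMem _ _ _ _ ha,
      ih (fun i hi j hj => h2 i (Finset.mem_insert_of_mem hi) j (Finset.mem_insert_of_mem hj))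
        (hc.mono hs) (hp.mono hs)]
    have hne : ∀ x ∈ s, a ≠ x := fun x hx e => ha (e ▸ hx)
    have c1 : Commute (V a) (s.noncommProd V (hc.mono hs)) :=
      Finset.noncommProd_commute _ _ _ _ fun x hx =>
        hc (by simp) (by simp [hx]) (hne x hx)
    have c2 : Commute (star (V a)) (s.noncommProd V (hc.mono hs)) :=
      Finset.noncommProd_commute _ _ _ _ fun x hx =>
        h2 a (by simp) x (by simp [hx]) (hne x hx)
    generalize s.noncommProd V (hc.mono hs) = W at c1 c2
    have c3 := c1.star_star
    rw [star_mul, ← c3.eq, mul_assoc, ← mul_assoc (star (V a)), c2.eq]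
    simp only [mul_assoc]

theorem aux_prod_zero {Λ A : Type*} [Ring A] (P : Λ → A) (U : Finset Λ)
    (hp : (U : Set Λ).Pairwise (Function.onFun Commute P)) {i j : Λ} (hi : i ∈ U) (hj : j ∈ U)
    (hij : i ≠ j) (h0 : P i * P j = 0) : U.noncommProd P hp = 0 := by
  classical
  have hp' : ((U.erase i : Finset Λ) : Set Λ).Pairwise (Function.onFun Commute P) :=
    hp.mono (by simp)
  have e1 : P i * (U.erase i).noncommProd P hp' = U.noncommProd P hp :=
    Finset.mul_noncommProd_erase U hi P hp
  have e2 := Finset.mul_noncommProd_erase (U.erase i)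
    (Finset.mem_erase.2 ⟨Ne.symm hij, hj⟩) P hp'
  rw [← e1, ← e2, ← mul_assoc, h0, zero_mul]

open Classical in
/-- For an isometric Nica-covariant family `V` on a simple graph `Γ`, the range projections
`P i = V i (V i)*` pairwise commute; moreover for a finite `U ⊆ Λ`, if `U` is a clique then
`∏_{i∈U} P i = V_U V_U*`, and if `U` contains two distinct non-adjacent vertices then
`∏_{i∈U} P i = 0`. -/
theorem stmt_7 {Λ : Type} (Γ : SimpleGraph Λ)
    {K : Type} [NormedAddCommGroup K] [InnerProductSpace ℂ K] [CompleteSpace K]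
    (V : Λ → (K →L[ℂ] K))
    -- each `V i` is an isometry:
    (hiso : ∀ i, ContinuousLinearMap.adjoint (V i) * V i = 1)
    -- Nica covariance: adjacent vertices give `*`-commuting isometries:
    (hnc₁ : ∀ i j, Γ.Adj i j → V i * V j = V j * V i ∧
      ContinuousLinearMap.adjoint (V i) * V j = V j * ContinuousLinearMap.adjoint (V i))
    -- non-adjacent vertices give isometries with orthogonal ranges:
    (hnc₂ : ∀ i j, i ≠ j → ¬ Γ.Adj i j → ContinuousLinearMap.adjoint (V i) * V j = 0)
    -- `VU U` is the product `∏_{i ∈ U} V i`, well defined for cliques `U`: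
    (VU : Finset Λ → (K →L[ℂ] K))
    (hVU : ∀ (U : Finset Λ) (hU : Γ.IsClique (U : Set Λ)),
      VU U = U.noncommProd V (fun i hi j hj hne => (hnc₁ i j (hU hi hj hne)).1))
    -- `PU U` is the product `∏_{i ∈ U} V i (V i)*` of the range projections, well defined
    -- since these pairwise commute:
    (PU : Finset Λ → (K →L[ℂ] K))
    (hPU : ∀ (U : Finset Λ)
      (hc : (U : Set Λ).Pairwise
        (Function.onFun Commute (fun i => V i * ContinuousLinearMap.adjoint (V i)))),
      PU U = U.noncommProd (fun i => V i * ContinuousLinearMap.adjoint (V i)) hc) :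
    -- the range projections pairwise commute:
    (∀ i j, Commute (V i * ContinuousLinearMap.adjoint (V i))
      (V j * ContinuousLinearMap.adjoint (V j))) ∧
    -- on cliques the product of range projections is the range projection of `V_U`:
    (∀ U : Finset Λ, Γ.IsClique (U : Set Λ) →
      PU U = VU U * ContinuousLinearMap.adjoint (VU U)) ∧
    -- if `U` contains two distinct non-adjacent vertices, the product vanishes:
    (∀ U : Finset Λ, (∃ i ∈ U, ∃ j ∈ U, i ≠ j ∧ ¬ Γ.Adj i j) → PU U = 0) := by
  have hcomm : ∀ i j, Commute (V i * ContinuousLinearMap.adjoint (V i))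
      (V j * ContinuousLinearMap.adjoint (V j)) := by
    intro i j
    by_cases hij : i = j
    · subst hij; exact Commute.refl _
    by_cases ha : Γ.Adj i j
    · exact aux_comm (hnc₁ i j ha).1 (hnc₁ i j ha).2
    · exact (aux_zero (hnc₂ i j hij ha)).trans
        (aux_zero (hnc₂ j i (Ne.symm hij) (fun h => ha h.symm))).symm
  refine ⟨hcomm, ?_, ?_⟩
  · intro U hU
    rw [hPU U (fun i _ j _ _ => hcomm i j), hVU U hU]
    exact aux_clique V U (fun i hi j hj hne => (hnc₁ i j (hU hi hj hne)).2) _ _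
  · rintro U ⟨i, hi, j, hj, hij, ha⟩
    rw [hPU U (fun i _ j _ _ => hcomm i j)]
    exact aux_prod_zero _ U _ hi hj hij (aux_zero (hnc₂ i j hij ha))
end

section
/- Let Γ be a finite simple graph with vertex set Λ, H a complex Hilbert space, and T : Λ → B(H) a family of operators such that T i and T j commute whenever i and j are adjacent in Γ. For V ⊆ Λ set Z_V = ∑_{U ⊆ V, U a clique} (−1)^{|U|} T_U (T_U)*. For a clique V let N_V = { λ ∈ Λ : λ ∉ V and λ is adjacent to every vertex of V }, with N_∅ = Λ. Then for every clique F ⊆ Λ, ∑_{W a clique with F ⊆ W} T_{W∖F} Z_{N_W} (T_{W∖F})* = I, the sum being over all cliques W of Γ containing F (note W∖F is again a clique). -/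
open scoped ComplexOrder
open Classical in
/-- Let `Γ` be a finite simple graph and `T` a family of operators commuting along edges.
With `Z_V = ∑_{U ⊆ V, U clique} (-1)^|U| T_U T_U*` and, for a clique `W`, `N_W` the set of
vertices outside `W` adjacent to every vertex of `W`, one has, for every clique `F`,
`∑_{W clique, F ⊆ W} T_{W∖F} Z_{N_W} (T_{W∖F})* = I`. -/
theorem stmt_10 {Λ : Type} [Fintype Λ] (Γ : SimpleGraph Λ)
    {H : Type} [NormedAddCommGroup H] [InnerProductSpace ℂ H] [CompleteSpace H]
    (T : Λ → H →L[ℂ] H)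
    (hcomm : ∀ i j, Γ.Adj i j → Commute (T i) (T j))
    -- `TU U` is the product `∏_{i ∈ U} T i`, well defined for cliques `U`:
    (TU : Finset Λ → (H →L[ℂ] H))
    (hTU : ∀ (U : Finset Λ) (hU : Γ.IsClique (U : Set Λ)),
      TU U = U.noncommProd T (fun i hi j hj hne => hcomm i j (hU hi hj hne)))
    -- `Z V = ∑_{U ⊆ V, U clique} (-1)^|U| T_U T_U*`:
    (Z : Finset Λ → (H →L[ℂ] H))
    (hZ : ∀ V : Finset Λ, Z V =
      ∑ U ∈ V.powerset.filter (fun U : Finset Λ => Γ.IsClique (U : Set Λ)),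
        ((-1:ℂ) ^ U.card) • (TU U * ContinuousLinearMap.adjoint (TU U)))
    -- `N W` is the neighborhood of the clique `W`: vertices not in `W` adjacent to all of `W`:
    (N : Finset Λ → Finset Λ)
    (hN : ∀ W : Finset Λ, N W =
      Finset.univ.filter (fun lam : Λ => lam ∉ W ∧ ∀ v ∈ W, Γ.Adj lam v)) :
    ∀ F : Finset Λ, Γ.IsClique (F : Set Λ) →
      ∑ W ∈ Finset.univ.filter (fun W : Finset Λ => Γ.IsClique (W : Set Λ) ∧ F ⊆ W),
        TU (W \ F) * Z (N W) * ContinuousLinearMap.adjoint (TU (W \ F)) = 1 := by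
  intro F hF
  have hmul : ∀ A B : Finset Λ, Γ.IsClique ((A ∪ B : Finset Λ) : Set Λ) → Disjoint A B →
      TU A * TU B = TU (A ∪ B) := by
    intro A B hAB hd
    have hA : Γ.IsClique (A : Set Λ) := hAB.subset (by simp)
    have hB : Γ.IsClique (B : Set Λ) := hAB.subset (by simp)
    rw [hTU A hA, hTU B hB, hTU _ hAB]
    exact (Finset.noncommProd_union_of_disjoint hd T _).symm
  have key : ∀ W ∈ Finset.univ.filter (fun W : Finset Λ => Γ.IsClique (W : Set Λ) ∧ F ⊆ W),
      TU (W \ F) * Z (N W) * ContinuousLinearMap.adjoint (TU (W \ F)) =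
      ∑ U ∈ (N W).powerset.filter (fun U : Finset Λ => Γ.IsClique (U : Set Λ)),
        ((-1:ℂ) ^ U.card) • ((TU (W \ F) * TU U) *
          ContinuousLinearMap.adjoint (TU (W \ F) * TU U)) := by
    intro W _
    rw [hZ, Finset.mul_sum, Finset.sum_mul]
    refine Finset.sum_congr rfl fun U _ => ?_
    have : ContinuousLinearMap.adjoint (TU (W \ F) * TU U) =
        ContinuousLinearMap.adjoint (TU U) * ContinuousLinearMap.adjoint (TU (W \ F)) :=
      ContinuousLinearMap.adjoint_comp _ _
    rw [this, mul_smul_comm, smul_mul_assoc]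
    simp only [mul_assoc]
  rw [Finset.sum_congr rfl key, Finset.sum_sigma']
  have hbij : ∀ G : Finset Λ → (H →L[ℂ] H), 
      (∑ Y ∈ Finset.univ.filter (fun W : Finset Λ => Γ.IsClique (W : Set Λ) ∧ F ⊆ W),
        ∑ U ∈ (Y \ F).powerset, ((-1:ℂ) ^ U.card) • G Y) = G F := by
    intro G
    rw [Finset.sum_eq_single F]
    · simp
    · intro Y hY hne
      rw [← Finset.sum_smul]
      have h := Finset.sum_powerset_neg_one_pow_card (x := Y \ F)
      have hn : Y \ F ≠ ∅ := by
        intro h0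
        exact hne (Finset.Subset.antisymm (Finset.sdiff_eq_empty_iff_subset.1 h0)
          (Finset.mem_filter.1 hY).2.2)
      rw [if_neg hn] at h
      have h' : (∑ U ∈ (Y \ F).powerset, (-1:ℂ) ^ U.card) = 0 := by exact_mod_cast h
      rw [h', zero_smul]
    · intro h
      exact absurd (by simp [hF]) h
  have h1 : TU ∅ = 1 := by rw [hTU ∅ (by simp)]; exact Finset.noncommProd_empty _ _
  have hfin := hbij (fun Y => TU (Y \ F) * ContinuousLinearMap.adjoint (TU (Y \ F)))
  have hadj : ContinuousLinearMap.adjoint (1 : H →L[ℂ] H) = 1 :=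
    star_one (H →L[ℂ] H)
  simp only [sdiff_self, Finset.bot_eq_empty, h1, hadj, mul_one] at hfin
  rw [← hfin, Finset.sum_sigma']
  have fact : ∀ W U : Finset Λ, Γ.IsClique (W : Set Λ) → F ⊆ W → U ⊆ N W →
      Γ.IsClique (U : Set Λ) → Γ.IsClique ((W ∪ U : Finset Λ) : Set Λ) ∧ Disjoint W U := by
    intro W U hW hFW hU hUc
    have hU' : ∀ u ∈ U, u ∉ W ∧ ∀ v ∈ W, Γ.Adj u v := by
      intro u hu
      have := hU hu
      rw [hN] at this
      simpa using this
    constructor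
    · intro a ha b hb hab
      simp only [Finset.coe_union, Set.mem_union, Finset.mem_coe] at ha hb
      rcases ha with ha | ha <;> rcases hb with hb | hb
      · exact hW ha hb hab
      · exact ((hU' b hb).2 a ha).symm
      · exact (hU' a ha).2 b hb
      · exact hUc ha hb hab
    · exact Finset.disjoint_left.2 fun a ha hu => (hU' a hu).1 ha
  refine Finset.sum_bij' (fun p _ => ⟨p.1 ∪ p.2, p.2⟩) (fun p _ => ⟨p.1 \ p.2, p.2⟩) ?_ ?_ ?_ ?_ ?_
  · rintro ⟨W, U⟩ h
    simp only [Finset.mem_sigma, Finset.mem_filter, Finset.mem_univ, true_and,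
      Finset.mem_powerset] at h ⊢
    obtain ⟨⟨hW, hFW⟩, hU, hUc⟩ := h
    obtain ⟨hc, hd⟩ := fact W U hW hFW hU hUc
    refine ⟨⟨hc, hFW.trans Finset.subset_union_left⟩, ?_⟩
    intro u hu
    simp only [Finset.mem_sdiff, Finset.mem_union]
    exact ⟨Or.inr hu, fun hf => Finset.disjoint_left.1 hd (hFW hf) hu⟩
  · rintro ⟨Y, U⟩ h
    simp only [Finset.mem_sigma, Finset.mem_filter, Finset.mem_univ, true_and,
      Finset.mem_powerset] at h ⊢
    obtain ⟨⟨hY, hFY⟩, hU⟩ := h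
    have hU' : ∀ u ∈ U, u ∈ Y ∧ u ∉ F := fun u hu => Finset.mem_sdiff.1 (hU hu)
    refine ⟨⟨hY.subset (by simp), ?_⟩, ?_, hY.subset fun u hu => (hU' u hu).1⟩
    · intro f hf
      exact Finset.mem_sdiff.2 ⟨hFY hf, fun hu => (hU' f hu).2 hf⟩
    · intro u hu
      rw [hN]
      simp only [Finset.mem_filter, Finset.mem_univ, true_and, Finset.mem_sdiff]
      refine ⟨fun h => h.2 hu, fun v hv => hY (hU' u hu).1 hv.1 ?_⟩
      rintro rfl
      exact hv.2 hu
  · rintro ⟨W, U⟩ h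
    simp only [Finset.mem_sigma, Finset.mem_filter, Finset.mem_univ, true_and,
      Finset.mem_powerset] at h
    obtain ⟨⟨hW, hFW⟩, hU, hUc⟩ := h
    obtain ⟨hc, hd⟩ := fact W U hW hFW hU hUc
    have : (W ∪ U) \ U = W := Finset.union_sdiff_cancel_right hd
    simp only [this]
  · rintro ⟨Y, U⟩ h
    simp only [Finset.mem_sigma, Finset.mem_filter, Finset.mem_univ, true_and,
      Finset.mem_powerset] at h
    have : Y \ U ∪ U = Y :=
      Finset.sdiff_union_of_subset (h.2.trans Finset.sdiff_subset)
    simp only [this]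
  · rintro ⟨W, U⟩ h
    simp only [Finset.mem_sigma, Finset.mem_filter, Finset.mem_univ, true_and,
      Finset.mem_powerset] at h
    obtain ⟨⟨hW, hFW⟩, hU, hUc⟩ := h
    obtain ⟨hc, hd⟩ := fact W U hW hFW hU hUc
    have he : (W ∪ U) \ F = (W \ F) ∪ U := by
      ext a
      have := fun hf : a ∈ F => Finset.disjoint_left.1 hd (hFW hf)
      simp only [Finset.mem_sdiff, Finset.mem_union]
      tauto
    have hm : TU (W \ F) * TU U = TU ((W ∪ U) \ F) := by
      rw [he]
      refine hmul _ _ (hc.subset ?_) (hd.mono_left Finset.sdiff_subset)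
      rw [← he]
      exact_mod_cast Finset.sdiff_subset
    simp only [hm]
end
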